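/- Let λ ∈ 𝔥* and let α ∈ Δ_[λ] be a simple root of the integral root system Φ_[λ]. Then there exists a dominant weight μ ∈ λ + Λ whose stabilizer in W under the dot action is exactly the two-element subgroup {1, s_α}, where s_α is the reflection associated to α. -/

import Mathlib

noncomputable section

variable {V : Type*} [AddCommGroup V] [Module ℂ V]

/-- `x` lies in the weight lattice `Λ = {x : ⟨x, α∨⟩ ∈ ℤ for all α ∈ Φ}`. -/
def InWeightLattice (Φ : Finset V) (coroot : V → (V →ₗ[ℂ] ℂ)) (x : V) : Prop :=
  ∀ α ∈ Φ, ∃ n : ℤ, coroot α x = (n : ℂ)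

/-- The dot action of `W` on `𝔥*`: `w · x = w(x + ρ) − ρ`. -/
def dotAct (ρ : V) (w : V ≃ₗ[ℂ] V) (x : V) : V := w (x + ρ) - ρ

/-- `x` is dominant: `⟨x + ρ, α∨⟩ ∉ {−1, −2, −3, …}` for every positive root `α`. -/
def IsDominant (Φpos : Finset V) (coroot : V → (V →ₗ[ℂ] ℂ)) (ρ : V) (x : V) : Prop :=
  ∀ α ∈ Φpos, ∀ n : ℤ, n < 0 → coroot α (x + ρ) ≠ (n : ℂ)

/-!
Shift `λ` by `ρ`, so that the dot action becomes the linear one. A vector `ν ∈ λ + Λ` with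
`⟨ν, α∨⟩ = 0` and `⟨ν, β∨⟩ > 0` for every other simple root `β` of `Φ_[λ]` is obtained from `λ` in
two steps: subtract a multiple of a weight `r` with `⟨r, α∨⟩ = 1`, then add a large multiple of
`2ρ_[λ] - α`, which is orthogonal to `α` and pairs positively with the other simple coroots.
The invariant form identifies `⟨ν, β∨⟩`, up to a positive rational factor, with a pairing linear in
`β`, so `⟨ν, β∨⟩ > 0` for every positive root `β ≠ α` of `Φ_[λ]`, while `⟨ν, β∨⟩ ∉ ℤ` for
`β ∉ Φ_[λ]`. Thus `±α` are the only roots orthogonal to `ν`, and the stabilizer of `ν` permutes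
`{α, -α}`. An element fixing both `ν` and `α` fixes a vector orthogonal to no root, that is, a
vector in an open Weyl chamber, so it is trivial.
-/

section RootSystems

open Module Set Submodule RootPairing

section Automorphisms

variable {ι R M N : Type*} [CommRing R] [AddCommGroup M] [Module R M]
  [AddCommGroup N] [Module R N] {P : RootPairing ι R M N}

theorem root_smul (g : P.Aut) (i : ι) : P.root (g • i) = g • P.root i :=
  Equiv.root_indexEquiv_eq_smul P i g

theorem toLinearMap_smul_coroot_smul (g : P.Aut) (x : M) (i : ι) :
    P.toLinearMap (g • x) (P.coroot (g • i)) = P.toLinearMap x (P.coroot i) := by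
  have hcoroot : g.coweightMap (P.coroot (g • i)) = P.coroot i := by
    rw [g.coroot_coweightMap_apply P P (g • i)]
    exact congrArg P.coroot (g.indexEquiv.symm_apply_apply i)
  rw [← hcoroot]
  exact LinearMap.congr_fun (g.weight_coweight_transpose_apply P P (P.coroot (g • i))) x

theorem smul_reflectionPerm_self (g : P.Aut) (i : ι) :
    g • P.reflectionPerm i i = P.reflectionPerm (g • i) (g • i) :=
  P.root.injective <| by
    rw [root_smul, P.root_reflectionPerm, P.root_reflectionPerm, P.reflection_apply_self,
      P.reflection_apply_self, smul_neg, root_smul]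

theorem reflection_smul_index (g : P.Aut) (i : ι) :
    Equiv.reflection P (g • i) = g * Equiv.reflection P i * g⁻¹ := by
  refine RootPairing.Equiv.weightHom_injective P (LinearEquiv.ext fun x ↦ ?_)
  change P.reflection (g • i) x = g • P.reflection i (g⁻¹ • x)
  obtain ⟨y, rfl⟩ : ∃ y, g • y = x := ⟨g⁻¹ • x, smul_inv_smul g x⟩
  rw [inv_smul_smul, P.reflection_apply, P.reflection_apply, root_smul, smul_sub, smul_comm g]
  congr 2
  exact toLinearMap_smul_coroot_smul g y i

theorem reflection_mul_self (P : RootPairing ι R M N) (i : ι) :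
    Equiv.reflection P i * Equiv.reflection P i = 1 := by
  rw [mul_eq_one_iff_inv_eq, Equiv.reflection_inv]

theorem reflection_smul_eq_reflectionPerm (P : RootPairing ι R M N) (i j : ι) :
    Equiv.reflection P i • j = P.reflectionPerm i j :=
  congrFun (congrArg DFunLike.coe (Equiv.reflection_indexEquiv P i)) j

end Automorphisms

section SimpleReflections

variable {ι R M N : Type*} [CommRing R] [AddCommGroup M] [Module R M]
  [AddCommGroup N] [Module R N] {P : RootPairing ι R M N}

/-- The product of a word in the simple reflections of a base. -/
def wordProd (b : P.Base) (l : List b.support) : P.Aut :=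
  (l.map fun i ↦ Equiv.reflection P i).prod

theorem wordProd_append (b : P.Base) (l l' : List b.support) :
    wordProd b (l ++ l') = wordProd b l * wordProd b l' := by
  simp [wordProd]

theorem wordProd_cons (b : P.Base) (i : b.support) (l : List b.support) :
    wordProd b (i :: l) = Equiv.reflection P i * wordProd b l := by
  simp [wordProd]

theorem isPos_smul_reflectionPerm_self_iff [CharZero R] (b : P.Base) (g : P.Aut) (i : ι) :
    b.IsPos (g • P.reflectionPerm i i) ↔ ¬ b.IsPos (g • i) := by
  rw [smul_reflectionPerm_self]
  exact Base.IsPos.neg_iff_not b (g • i)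

variable [Finite ι] [CharZero R] [IsDomain R] [P.IsCrystallographic] [P.IsReduced] {b : P.Base}

theorem exists_wordProd_eq_reflection (b : P.Base) (i : ι) :
    ∃ l, wordProd b l = Equiv.reflection P i := by
  induction i using b.induction_reflect with
  | h₀ i ih =>
    rw [← reflection_smul_eq_reflectionPerm, reflection_smul_index, reflection_mul_self, one_mul,
      Equiv.reflection_inv]
    exact ih
  | h₁ i hi => exact ⟨[⟨i, hi⟩], by simp [wordProd]⟩
  | h₂ i j ih hj =>
    obtain ⟨l, hl⟩ := ih
    refine ⟨⟨j, hj⟩ :: l ++ [⟨j, hj⟩], ?_⟩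
    rw [wordProd_append, wordProd_cons, hl, ← reflection_smul_eq_reflectionPerm,
      reflection_smul_index]
    simp [wordProd]

theorem exists_wordProd_eq (b : P.Base) {g : P.Aut} (hg : g ∈ P.weylGroup) :
    ∃ l, wordProd b l = g := by
  induction hg using weylGroup.induction with
  | mem i => exact exists_wordProd_eq_reflection b i
  | one => exact ⟨[], rfl⟩
  | mul x y _ _ hx hy =>
    obtain ⟨⟨l, rfl⟩, l', rfl⟩ := And.intro hx hy
    exact ⟨l ++ l', wordProd_append b l l'⟩

-- The exchange property: the letter deleted is the one that makes the root negative.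
theorem exists_wordProd_eq_mul_reflection {j : ι} (hj : b.IsPos j) (l : List b.support)
    (hneg : ¬ b.IsPos (wordProd b l • j)) :
    ∃ l', l'.length < l.length ∧ wordProd b l' = wordProd b l * Equiv.reflection P j := by
  induction l with
  | nil => exact absurd (by simpa [wordProd] using hj) hneg
  | cons i t ih =>
    rw [wordProd_cons, mul_smul, reflection_smul_eq_reflectionPerm] at hneg
    by_cases hpos : b.IsPos (wordProd b t • j)
    · have hij : wordProd b t • j = i := by
        by_contra hne
        exact hneg (hpos.reflectionPerm i.2 hne)
      refine ⟨t, by simp, ?_⟩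
      rw [wordProd_cons, ← hij, reflection_smul_index, inv_mul_cancel_right, mul_assoc,
        reflection_mul_self, mul_one]
    · obtain ⟨t', hlen, heq⟩ := ih hpos
      exact ⟨i :: t', by simpa, by rw [wordProd_cons, heq, wordProd_cons, mul_assoc]⟩

theorem eq_one_of_forall_isPos_smul {g : P.Aut} (hg : g ∈ P.weylGroup)
    (hpos : ∀ i ∈ b.support, b.IsPos (g • i)) : g = 1 := by
  obtain ⟨l, rfl⟩ := exists_wordProd_eq b hg
  induction hn : l.length using Nat.strong_induction_on generalizing l with
  | _ n ih =>
  obtain rfl | ⟨t, j, rfl⟩ := l.eq_nil_or_concat'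
  · rfl
  have hsplit : wordProd b (t ++ [j]) = wordProd b t * Equiv.reflection P j := by
    simp [wordProd]
  have hneg : ¬ b.IsPos (wordProd b t • (j : ι)) := by
    rw [← isPos_smul_reflectionPerm_self_iff, ← reflection_smul_eq_reflectionPerm, ← mul_smul,
      ← hsplit]
    exact hpos j j.2
  obtain ⟨t', hlen, ht'⟩ := exists_wordProd_eq_mul_reflection (b.isPos_of_mem_support j.2) t hneg
  rw [← hsplit] at ht'
  rw [← ht'] at hg hpos ⊢
  have htn : t'.length < n := by
    rw [← hn, List.length_append]
    omega
  exact ih _ htn t' hg hpos rfl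

end SimpleReflections

section RootForm

variable {ι R M N : Type*} [Fintype ι] [AddCommGroup M] [AddCommGroup N]

theorem rootForm_root_self_mul_toLinearMap_coroot [CommRing R] [Module R M] [Module R N]
    (P : RootPairing ι R M N) (x : M) (i : ι) :
    P.RootForm (P.root i) (P.root i) * P.toLinearMap x (P.coroot i) =
      2 * P.RootForm x (P.root i) := by
  rw [← smul_eq_mul, ← map_smul, P.rootForm_self_smul_coroot, map_nsmul, nsmul_eq_mul,
    P.toLinearMap_apply_apply_Polarization, ← P.rootForm_symmetric.eq, RingHom.id_apply,
    Nat.cast_ofNat]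

theorem rootForm_root_eq_zero_iff [CommRing R] [IsDomain R] [NeZero (2 : R)] [Module R M]
    [Module R N] (P : RootPairing ι R M N) [P.IsAnisotropic] (x : M) (i : ι) :
    P.RootForm x (P.root i) = 0 ↔ P.toLinearMap x (P.coroot i) = 0 := by
  rw [← mul_eq_zero_iff_left (two_ne_zero (α := R)),
    ← rootForm_root_self_mul_toLinearMap_coroot,
    mul_eq_zero_iff_left (IsAnisotropic.rootForm_root_ne_zero i)]

theorem exists_rat_pos_eq_rootForm_iff [Field R] [CharZero R] [Module R M] [Module R N]
    (P : RootPairing ι R M N) [P.IsCrystallographic] (x : M) (i : ι) :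
    (∃ q : ℚ, 0 < q ∧ P.RootForm x (P.root i) = q) ↔
      ∃ q : ℚ, 0 < q ∧ P.toLinearMap x (P.coroot i) = q := by
  obtain ⟨l, hl, hli⟩ : ∃ l : ℤ, 0 < l ∧ l = P.RootForm (P.root i) (P.root i) :=
    (P.posRootForm ℤ).exists_pos_eq i
  have hform := rootForm_root_self_mul_toLinearMap_coroot P x i
  have hl0 : (l : R) ≠ 0 := by exact_mod_cast hl.ne'
  rw [← hli] at hform
  constructor
  · rintro ⟨q, hq, hqx⟩
    refine ⟨2 * q / l, by positivity, ?_⟩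
    push_cast
    rw [eq_div_iff hl0, ← hqx, ← hform, mul_comm]
  · rintro ⟨q, hq, hqx⟩
    refine ⟨l * q / 2, by positivity, ?_⟩
    push_cast
    rw [eq_div_iff two_ne_zero, ← hqx, hform, mul_comm]

end RootForm

section Stabilizer

variable {ι R M N : Type*} [Finite ι] [Field R] [CharZero R]
  [AddCommGroup M] [Module R M] [AddCommGroup N] [Module R N]
  {P : RootPairing ι R M N} [P.IsRootSystem] [P.IsCrystallographic] [P.IsReduced]

theorem exists_base_isPos_iff (P : RootPairing ι R M N) [P.IsRootSystem] [P.IsCrystallographic]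
    [P.IsReduced] (f : M →+ ℚ) (hf : ∀ i, f (P.root i) ≠ 0) :
    ∃ b : P.Base, ∀ i, b.IsPos i ↔ 0 < f (P.root i) := by
  have hsub := IsAddIndecomposable.baseOf_subset_pos P.root f
  obtain ⟨b, hb⟩ : ∃ b : P.Base, b.support = IsAddIndecomposable.baseOf P.root f := by
    let := P.indexNeg
    have := Fintype.ofFinite (IsAddIndecomposable.baseOf P.root f)
    refine ⟨Base.mk' P (IsAddIndecomposable.baseOf P.root f) (P.linearIndepOn_root_baseOf f hf)
      fun i ↦ IsAddIndecomposable.mem_or_neg_mem_closure_baseOf P.root f i (hf i) (by simp), ?_⟩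
    simp [Base.mk']
  have hpos {i : ι} (hi : b.IsPos i) : 0 < f (P.root i) :=
    hi.induction_on_add (p := fun i ↦ 0 < f (P.root i)) (fun i hi ↦ hsub (hb ▸ hi))
      fun i j k hk hi hj ↦ by rw [hk, map_add]; exact add_pos hi (hsub (hb ▸ hj))
  refine ⟨b, fun i ↦ ⟨hpos, fun hi ↦ ?_⟩⟩
  by_contra hnot
  have hneg := hpos ((Base.IsPos.neg_iff_not b i).2 hnot)
  rw [indexNeg_neg, P.root_reflectionPerm, P.reflection_apply_self, map_neg, neg_pos] at hneg
  exact hneg.not_gt hi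

theorem eq_one_of_forall_exists_smul_eq {g : P.Aut} (hg : g ∈ P.weylGroup)
    (hfix : ∀ i, ∃ x, g • x = x ∧ P.toLinearMap x (P.coroot i) ≠ 0) : g = 1 := by
  have := Fintype.ofFinite ι
  obtain ⟨x, hgx, hx⟩ := Dual.exists_forall_mem_ne_zero_of_forall_exists
    (LinearMap.eqLocus (Equiv.weightHom P g).toLinearMap LinearMap.id)
    (fun i ↦ P.toLinearMap.flip (P.coroot i)) hfix
  -- `R` need not be ordered: the chamber containing `x` is taken with respect to a `ℚ`-linear
  -- form on `R` that vanishes on none of the values `P.RootForm x (P.root i)`.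
  obtain ⟨φ, hφ⟩ := exists_dual_forall_apply_ne_zero (K := ℚ) (fun i ↦ P.RootForm x (P.root i))
    fun i ↦ (rootForm_root_eq_zero_iff P x i).not.2 (hx i)
  obtain ⟨b, hb⟩ := exists_base_isPos_iff P
    (φ.toAddMonoidHom.comp (P.RootForm x).toAddMonoidHom) hφ
  refine eq_one_of_forall_isPos_smul (b := b) hg fun i hi ↦ ?_
  have hinv : P.RootForm x (g • P.root i) = P.RootForm x (P.root i) := by
    conv_lhs => rw [← show g • x = x from hgx]
    exact InvariantForm.apply_weylGroup_smul P (B := P.toInvariantForm) ⟨g, hg⟩ x (P.root i)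
  have hpos := (hb i).1 (b.isPos_of_mem_support hi)
  rw [hb, root_smul]
  simpa [hinv] using hpos

theorem smul_eq_self_iff_of_toLinearMap_coroot_eq_zero {a : ι} {x : M}
    (ha : P.toLinearMap x (P.coroot a) = 0)
    (hx : ∀ i, P.toLinearMap x (P.coroot i) = 0 → P.root i = P.root a ∨ P.root i = -P.root a)
    {g : P.Aut} (hg : g ∈ P.weylGroup) :
    g • x = x ↔ g = 1 ∨ g = Equiv.reflection P a := by
  have hfix : P.reflection a x = x := by simp [P.reflection_apply, ha]
  have eq_one {h : P.Aut} (hh : h ∈ P.weylGroup) (hhx : h • x = x)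
      (hha : h • P.root a = P.root a) : h = 1 := by
    refine eq_one_of_forall_exists_smul_eq hh fun i ↦ ?_
    by_cases hi : P.toLinearMap x (P.coroot i) = 0
    · refine ⟨P.root a, hha, fun h0 ↦ ?_⟩
      rw [P.root_coroot_eq_pairing, P.pairing_eq_zero_iff, ← P.root_coroot_eq_pairing] at h0
      obtain h | h := hx i hi <;> simp [h] at h0
    · exact ⟨x, hhx, hi⟩
  refine ⟨fun hgx ↦ ?_, ?_⟩
  · have hga : P.toLinearMap x (P.coroot (g • a)) = 0 := by
      rw [← hgx, toLinearMap_smul_coroot_smul, ha]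
    obtain h | h := hx _ hga
    · exact .inl (eq_one hg hgx (by rw [← root_smul, h]))
    · right
      rw [← mul_left_inj (Equiv.reflection P a), reflection_mul_self]
      refine eq_one (mul_mem hg (reflection_mem_weylGroup P a)) ?_ ?_
      · rw [mul_smul, Equiv.reflection_smul, hfix, hgx]
      · rw [mul_smul, Equiv.reflection_smul, P.reflection_apply_self, smul_neg, ← root_smul, h,
          neg_neg]
  · rintro (rfl | rfl)
    · exact one_smul _ x
    · exact hfix

theorem apply_eq_self_iff_of_toLinearMap_coroot_eq_zero {a : ι} {x : M}
    (ha : P.toLinearMap x (P.coroot a) = 0)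
    (hx : ∀ i, P.toLinearMap x (P.coroot i) = 0 → P.root i = P.root a ∨ P.root i = -P.root a)
    {w : M ≃ₗ[R] M} (hw : w ∈ Subgroup.closure (range P.reflection)) :
    w x = x ↔ w = 1 ∨ w = P.reflection a := by
  rw [← range_weylGroup_weightHom] at hw
  obtain ⟨g, rfl⟩ := hw
  have hinj (h : P.Aut) : Equiv.weightHom P g = Equiv.weightHom P h ↔ g = h :=
    (Equiv.weightHom_injective P).eq_iff
  have hone := hinj 1
  have hrefl := hinj (Equiv.reflection P a)
  rw [map_one] at hone
  rw [Equiv.weightHom_apply P (Equiv.reflection P a), Equiv.reflection_weightEquiv] at hrefl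
  exact (smul_eq_self_iff_of_toLinearMap_coroot_eq_zero ha hx g.2).trans
    (or_congr hone.symm hrefl.symm)

end Stabilizer

section Bases

variable {ι R M N : Type*} [AddCommGroup M] [AddCommGroup N]

theorem map_mem_closure_image_comp_iff {A B : Type*} [AddMonoid A] [AddMonoid B] {f : A →+ B}
    (hf : Function.Injective f) (v : ι → A) (s : Set ι) (x : A) :
    f x ∈ AddSubmonoid.closure ((fun i ↦ f (v i)) '' s) ↔ x ∈ AddSubmonoid.closure (v '' s) := by
  rw [← Set.image_image, ← AddMonoidHom.map_mclosure]
  exact AddSubmonoid.mem_map_iff_mem hf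

variable [Field R] [CharZero R] [Module R M] [Module R N]

-- `RootPairing.Base.mk'` assumes a root system, so restrict `P` to the spans of roots and coroots.
theorem exists_base_support_eq [Finite ι] (P : RootPairing ι R M N) [P.IsCrystallographic]
    [P.IsReduced] (s : Finset ι) (hli : LinearIndepOn R P.root s)
    (hsp : ∀ i, P.root i ∈ AddSubmonoid.closure (P.root '' s) ∨
      -P.root i ∈ AddSubmonoid.closure (P.root '' s)) : ∃ b : P.Base, b.support = s := by
  have := Fintype.ofFinite ι
  let Q := P.restrictScalars' R
  have hpairing (i j) : Q.pairing i j = P.pairing i j := P.restrictScalars_pairing R i j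
  have : Q.IsCrystallographic := ⟨fun i j ↦ by
    simpa [hpairing] using P.exists_value (S := ℤ) i j⟩
  have : Q.IsReduced := ⟨fun i j hij ↦ by
    have h := RootPairing.IsReduced.eq_or_eq_neg (P := P) i j fun h ↦ hij <|
      .of_comp (span R (range P.root)).subtype (by convert h using 1; ext k; fin_cases k <;> rfl)
    simpa [Subtype.ext_iff] using! h⟩
  have hrootIndep : LinearIndepOn R Q.root s ↔ LinearIndepOn R P.root s :=
    ((span R (range P.root)).subtype.linearIndepOn_iff_of_injOn Subtype.val_injective.injOn).symm
  have hcorootIndep : LinearIndepOn R Q.coroot s ↔ LinearIndepOn R P.coroot s :=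
    ((span R (range P.coroot)).subtype.linearIndepOn_iff_of_injOn Subtype.val_injective.injOn).symm
  have hrootMem := map_mem_closure_image_comp_iff
    (f := (span R (range P.root)).subtype.toAddMonoidHom) Subtype.val_injective Q.root s
  have hcorootMem := map_mem_closure_image_comp_iff
    (f := (span R (range P.coroot)).subtype.toAddMonoidHom) Subtype.val_injective Q.coroot s
  let b := RootPairing.Base.mk' Q s (hrootIndep.2 hli) fun i ↦
    (hsp i).imp (hrootMem _).1 (hrootMem (-Q.root i)).1
  have hb : b.support = s := by simp [b, RootPairing.Base.mk']
  exact
    ⟨{  support := s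
        linearIndepOn_root := hli
        linearIndepOn_coroot := hcorootIndep.1 (hb ▸ b.linearIndepOn_coroot)
        root_mem_or_neg_mem := hsp
        coroot_mem_or_neg_mem := fun i ↦
          (hb ▸ b.coroot_mem_or_neg_mem i).imp (hcorootMem _).2 (hcorootMem (-Q.coroot i)).2 },
      rfl⟩

variable {P : RootPairing ι R M N} {b : P.Base}

theorem isPos_of_root_mem_closure {i : ι}
    (hi : P.root i ∈ AddSubmonoid.closure (P.root '' b.support)) : b.IsPos i := by
  rw [← span_nat_eq_addSubmonoidClosure, mem_toAddSubmonoid,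
    mem_span_image_finset_iff_exists_fun'] at hi
  obtain ⟨c, hc⟩ := hi
  have hsum : P.root i = ∑ j ∈ b.support, (c j : ℤ) • P.root j := by simpa using hc.symm
  rw [Base.isPos_iff', Base.height_eq_sum hsum]
  positivity

theorem exists_base_image_root_support_eq [Finite ι] (P : RootPairing ι R M N)
    [P.IsCrystallographic] [P.IsReduced] {Ψ Δ : Set M}
    (hΨ : ∀ i, P.root i ∉ Ψ → -P.root i ∈ Ψ) (hΔ : Δ ⊆ range P.root)
    (hli : LinearIndepOn R id Δ) (hmem : ∀ i, P.root i ∈ Ψ → P.root i ∈ AddSubmonoid.closure Δ) :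
    ∃ b : P.Base, P.root '' b.support = Δ ∧ ∀ i, P.root i ∈ Ψ → b.IsPos i := by
  obtain ⟨s, hs⟩ := (toFinite (P.root ⁻¹' Δ)).exists_finset_coe
  have himage : P.root '' s = Δ := by rw [hs, image_preimage_eq_of_subset hΔ]
  rw [← himage] at hli hmem
  obtain ⟨b, rfl⟩ := exists_base_support_eq P s
    ((linearIndepOn_iff_image P.root.injective.injOn).2 hli) fun i ↦ by
      by_cases hi : P.root i ∈ Ψ
      · exact .inl (hmem i hi)
      · right
        have hneg := hΨ i hi
        rw [← P.reflection_apply_self, ← P.root_reflectionPerm] at hneg ⊢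
        exact hmem _ hneg
  exact ⟨b, himage, fun i hi ↦ isPos_of_root_mem_closure (hmem i hi)⟩

open scoped Classical in
theorem sum_isPos_pairing [Fintype ι] [P.IsCrystallographic] [P.IsReduced] (b : P.Base) {j : ι}
    (hj : j ∈ b.support) : ∑ i with b.IsPos i, P.pairing i j = 2 := by
  have hpos : j ∈ Finset.univ.filter b.IsPos := by simpa using b.isPos_of_mem_support hj
  rw [← Finset.add_sum_erase _ _ hpos, P.pairing_same, add_eq_left]
  have hneg (i : ι) : P.pairing (P.reflectionPerm j i) j = -P.pairing i j := by
    rw [← P.pairing_reflectionPerm, P.pairing_reflectionPerm_self_right]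
  refine Finset.sum_involution (fun i _ ↦ P.reflectionPerm j i) ?_ ?_ ?_ ?_
  · intro i _
    rw [hneg, add_neg_cancel]
  · intro i _ hi hfix
    have hself := hneg i
    rw [hfix, self_eq_neg] at hself
    exact hi hself
  · intro i hi
    simp only [Finset.mem_erase, Finset.mem_filter_univ] at hi ⊢
    refine ⟨fun hij ↦ ?_, hi.2.reflectionPerm hj hi.1⟩
    obtain rfl : i = P.reflectionPerm j j :=
      (P.reflectionPerm j).injective (by rw [hij, P.reflectionPerm_involutive j])
    exact (RootPairing.Base.IsPos.neg_iff_not b j).1 hi.2 (b.isPos_of_mem_support hj)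
  · intro i _
    simp

end Bases

section WeightLattice

variable {ι R M N : Type*} [CommRing R] [AddCommGroup M] [Module R M] [AddCommGroup N] [Module R N]

/-- The lattice of weights of a root pairing: the vectors pairing integrally with every coroot. -/
def weightLattice (P : RootPairing ι R M N) : AddSubgroup M where
  carrier := {x | ∀ i, ∃ n : ℤ, P.toLinearMap x (P.coroot i) = n}
  zero_mem' _ := ⟨0, by simp⟩
  add_mem' hx hy i := by
    obtain ⟨⟨m, hm⟩, n, hn⟩ := And.intro (hx i) (hy i)
    exact ⟨m + n, by simp [hm, hn]⟩
  neg_mem' hx i := by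
    obtain ⟨n, hn⟩ := hx i
    exact ⟨-n, by simp [hn]⟩

theorem root_mem_weightLattice (P : RootPairing ι R M N) [P.IsCrystallographic] (i : ι) :
    P.root i ∈ weightLattice P := fun j ↦ by
  obtain ⟨n, hn⟩ := P.exists_value (S := ℤ) i j
  exact ⟨n, by simpa using hn.symm⟩

variable {P : RootPairing ι R M N}

theorem smul_mem_weightLattice (g : P.Aut) {x : M} (hx : x ∈ weightLattice P) :
    g • x ∈ weightLattice P := fun i ↦ by
  rw [← smul_inv_smul g i, toLinearMap_smul_coroot_smul]
  exact hx _

theorem mem_weightLattice_of_forall_mem_support (b : P.Base) {x : M}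
    (hx : ∀ j ∈ b.support, ∃ n : ℤ, P.toLinearMap x (P.coroot j) = n) : x ∈ weightLattice P := by
  intro i
  have hi := b.coroot_mem_span_int i
  generalize P.coroot i = y at hi
  induction hi using Submodule.span_induction with
  | mem y hy =>
    obtain ⟨j, hj, rfl⟩ := hy
    exact hx j hj
  | zero => exact ⟨0, by simp⟩
  | add y z _ _ hy hz =>
    obtain ⟨⟨m, hm⟩, n, hn⟩ := And.intro hy hz
    exact ⟨m + n, by simp [hm, hn]⟩
  | smul k y _ hy =>
    obtain ⟨n, hn⟩ := hy
    exact ⟨k * n, by simp [hn]⟩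

end WeightLattice

section HalfSum

theorem sum_eq_sum_sub_two_nsmul_sum_sdiff {ι A : Type*} [DecidableEq ι] [InvolutiveNeg ι]
    [AddCommGroup A] {v : ι → A} (hv : ∀ i, v (-i) = -v i) {S T : Finset ι}
    (hS : ∀ i, -i ∈ S ↔ i ∉ S) (hT : ∀ i, -i ∈ T ↔ i ∉ T) :
    ∑ i ∈ S, v i = ∑ i ∈ T, v i - 2 • ∑ i ∈ T \ S, v i := by
  have hneg : ∑ i ∈ S \ T, v i = -∑ i ∈ T \ S, v i := by
    rw [← Finset.sum_neg_distrib]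
    refine Finset.sum_nbij' Neg.neg Neg.neg ?_ ?_ ?_ ?_ ?_ <;> simp +contextual [hS, hT, hv]
  rw [← Finset.sum_inter_add_sum_sdiff S T, ← Finset.sum_inter_add_sum_sdiff T S, hneg,
    Finset.inter_comm]
  abel

variable {ι R M N : Type*} [Field R] [CharZero R] [AddCommGroup M] [Module R M]
  [AddCommGroup N] [Module R N] {P : RootPairing ι R M N}

open scoped Classical in
/-- Half the sum of the roots that are positive with respect to the base `b`. -/
def halfSum [Fintype ι] (b : P.Base) : M :=
  (2⁻¹ : R) • ∑ i with b.IsPos i, P.root i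

variable [P.IsCrystallographic] [P.IsReduced]

theorem toLinearMap_halfSum_coroot [Fintype ι] (b : P.Base) {j : ι} (hj : j ∈ b.support) :
    P.toLinearMap (halfSum b) (P.coroot j) = 1 := by
  simp only [halfSum, map_smul, map_sum, LinearMap.smul_apply, LinearMap.sum_apply,
    P.root_coroot_eq_pairing, sum_isPos_pairing b hj, smul_eq_mul]
  norm_num

theorem halfSum_mem_weightLattice [Fintype ι] (b : P.Base) : halfSum b ∈ weightLattice P :=
  mem_weightLattice_of_forall_mem_support b fun j hj ↦
    ⟨1, by rw [toLinearMap_halfSum_coroot b hj, Int.cast_one]⟩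

-- Any two such `Ψ` differ by sign changes, which alter `x` by a sum of roots.
theorem mem_weightLattice_of_two_nsmul_eq_sum [Finite ι] [P.IsRootSystem] {Ψ : Finset M}
    (hroot : (Ψ : Set M) ⊆ range P.root) (hneg : ∀ i, P.root i ∈ Ψ ↔ -P.root i ∉ Ψ) {x : M}
    (hx : 2 • x = ∑ α ∈ Ψ, α) : x ∈ weightLattice P := by
  classical
  have := Fintype.ofFinite ι
  let := P.indexNeg
  obtain ⟨b⟩ := P.nonempty_base
  set S : Finset ι := Ψ.preimage P.root P.root.injective.injOn with hSdef
  have hS (i : ι) : -i ∈ S ↔ i ∉ S := by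
    simp [hSdef, hneg i]
  replace hx : 2 • x = ∑ i ∈ S, P.root i := hx.trans <| .symm <|
    Finset.sum_preimage P.root Ψ P.root.injective.injOn id fun α hα h ↦ absurd (hroot hα) h
  set T : Finset ι := {i | b.IsPos i} with hT
  have hhalf : 2 • halfSum b = ∑ i ∈ T, P.root i := by
    rw [halfSum, ← Nat.cast_smul_eq_nsmul R, smul_smul]
    simp [hT]
  have hsum := sum_eq_sum_sub_two_nsmul_sum_sdiff (v := P.root) (by simp) (S := S) (T := T) hS
    (by simpa [hT] using Base.IsPos.neg_iff_not b)
  have hxT : x = halfSum b - ∑ i ∈ T \ S, P.root i := by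
    rw [← hx, ← hhalf, ← smul_sub, ← Nat.cast_smul_eq_nsmul R, ← Nat.cast_smul_eq_nsmul R] at hsum
    exact smul_right_injective M (two_ne_zero (α := R)) (by simpa using hsum)
  rw [hxT]
  exact sub_mem (halfSum_mem_weightLattice b) (sum_mem fun i _ ↦ root_mem_weightLattice P i)

theorem exists_mem_weightLattice_toLinearMap_coroot_eq_one [Finite ι] [P.IsRootSystem] (i : ι) :
    ∃ x ∈ weightLattice P, P.toLinearMap x (P.coroot i) = 1 := by
  have := Fintype.ofFinite ι
  obtain ⟨b⟩ := P.nonempty_base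
  induction i using b.induction_reflect with
  | h₀ i ih =>
    obtain ⟨x, hx, hxi⟩ := ih
    exact ⟨-x, neg_mem hx, by simpa⟩
  | h₁ j hj => exact ⟨halfSum b, halfSum_mem_weightLattice b, toLinearMap_halfSum_coroot b hj⟩
  | h₂ i j ih _ =>
    obtain ⟨x, hx, hxi⟩ := ih
    refine ⟨Equiv.reflection P j • x, smul_mem_weightLattice _ hx, ?_⟩
    rw [← reflection_smul_eq_reflectionPerm, toLinearMap_smul_coroot_smul, hxi]

end HalfSum

section Wall

variable {ι R M N : Type*} [Field R] [AddCommGroup M] [Module R M]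
  [AddCommGroup N] [Module R N] {P : RootPairing ι R M N} {b : P.Base} {a : ι}

theorem exists_nsmul_add_toLinearMap_coroot_pos {x θ : M}
    (hx : ∀ j ∈ b.support, ∃ n : ℤ, P.toLinearMap x (P.coroot j) = n)
    (hθ : ∀ j ∈ b.support, j ≠ a → ∃ n : ℤ, 0 < n ∧ P.toLinearMap θ (P.coroot j) = n) :
    ∃ N : ℕ, ∀ j ∈ b.support, j ≠ a →
      ∃ n : ℤ, 0 < n ∧ P.toLinearMap (x + N • θ) (P.coroot j) = n := by
  choose! m hm using hx
  obtain ⟨N, hN⟩ := (b.support.image fun j ↦ (-m j).toNat).exists_le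
  refine ⟨N + 1, fun j hj hja ↦ ?_⟩
  obtain ⟨k, hk, hkθ⟩ := hθ j hj hja
  have hmN : (-m j).toNat ≤ N := hN _ (Finset.mem_image_of_mem _ hj)
  refine ⟨m j + (N + 1) * k, ?_, ?_⟩
  · have : -m j ≤ N := by omega
    nlinarith
  · simp [hm j hj, hkθ]

variable [CharZero R] [P.IsCrystallographic] [P.IsReduced]

theorem exists_mem_closure_range_root_toLinearMap_coroot_pos [Finite ι] (ha : a ∈ b.support) :
    ∃ θ ∈ AddSubgroup.closure (range P.root), P.toLinearMap θ (P.coroot a) = 0 ∧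
      ∀ j ∈ b.support, j ≠ a → ∃ n : ℤ, 0 < n ∧ P.toLinearMap θ (P.coroot j) = n := by
  classical
  have := Fintype.ofFinite ι
  refine ⟨∑ i with b.IsPos i, P.root i - P.root a,
    sub_mem (sum_mem fun i _ ↦ AddSubgroup.subset_closure (mem_range_self i))
      (AddSubgroup.subset_closure (mem_range_self a)), ?_, fun j hj hja ↦ ?_⟩
  · simp [sum_isPos_pairing b ha]
  · have hle : P.pairingIn ℤ a j ≤ 0 := b.pairingIn_le_zero_of_ne hja.symm ha hj
    refine ⟨2 - P.pairingIn ℤ a j, by omega, ?_⟩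
    have := P.algebraMap_pairingIn ℤ a j
    simp_all [sum_isPos_pairing b hj]

theorem eq_or_exists_rat_pos_eq_toLinearMap_coroot [Finite ι] {i : ι} {x : M}
    (hxa : P.toLinearMap x (P.coroot a) = 0)
    (hx : ∀ j ∈ b.support, j ≠ a → ∃ q : ℚ, 0 < q ∧ P.toLinearMap x (P.coroot j) = q)
    (hi : b.IsPos i) : i = a ∨ ∃ q : ℚ, 0 < q ∧ P.toLinearMap x (P.coroot i) = q := by
  have := Fintype.ofFinite ι
  have := P.isAnisotropic_of_isValuedIn ℤ
  have : IsAddTorsionFree M := .of_isTorsionFree R M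
  simp only [← exists_rat_pos_eq_rootForm_iff] at hx ⊢
  replace hxa : P.RootForm x (P.root a) = 0 := (rootForm_root_eq_zero_iff P x a).2 hxa
  refine hi.induction_on_add (p := fun i ↦ i = a ∨ ∃ q : ℚ, 0 < q ∧ P.RootForm x (P.root i) = q)
    (fun j hj ↦ or_iff_not_imp_left.2 (hx j hj)) fun i j k hk hi hj ↦ ?_
  rw [hk, map_add]
  obtain rfl | hja := eq_or_ne j a
  · obtain rfl | hi := hi
    · exact absurd ⟨k, hk.trans (two_nsmul _).symm⟩ P.nsmul_notMem_range_root
    · simpa [hxa] using .inr hi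
  · obtain ⟨q, hq, hqj⟩ := hx j hj hja
    obtain rfl | ⟨q', hq', hqi⟩ := hi
    · exact .inr ⟨q, hq, by rw [hxa, hqj, zero_add]⟩
    · exact .inr ⟨q' + q, by positivity, by rw [hqi, hqj, Rat.cast_add]⟩

end Wall

section IntegralRoots

variable {ι R M N : Type*} [CommRing R] [AddCommGroup M] [Module R M] [AddCommGroup N] [Module R N]

/-- The root pairing formed by a set of roots stable under its own reflections, in the same
ambient spaces. -/
def subpairing (P : RootPairing ι R M N) (S : Set ι)
    (hS : ∀ i ∈ S, ∀ j ∈ S, P.reflectionPerm i j ∈ S) : RootPairing S R M N where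
  toLinearMap := P.toLinearMap
  root := (Function.Embedding.subtype _).trans P.root
  coroot := (Function.Embedding.subtype _).trans P.coroot
  root_coroot_two i := P.root_coroot_two i
  reflectionPerm i := Equiv.Perm.subtypePerm (P.reflectionPerm i) fun j ↦
    ⟨fun h ↦ by simpa using hS i i.2 _ h, hS i i.2 j⟩
  reflectionPerm_root i j := P.reflectionPerm_root i j
  reflectionPerm_coroot i j := P.reflectionPerm_coroot i j

/-- The indices of the roots of `P` that are integral for `x`; for `x = λ` they form the paper's
`Φ_[λ]`. -/
def integralIndices (P : RootPairing ι R M N) (x : M) : Set ι :=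
  {i | ∃ n : ℤ, P.toLinearMap x (P.coroot i) = n}

theorem reflectionPerm_mem_integralIndices (P : RootPairing ι R M N) [P.IsCrystallographic] {x : M}
    {i j : ι} (hi : i ∈ integralIndices P x) (hj : j ∈ integralIndices P x) :
    P.reflectionPerm i j ∈ integralIndices P x := by
  obtain ⟨⟨m, hm⟩, n, hn⟩ := And.intro hi hj
  obtain ⟨k, hk⟩ := P.exists_value (S := ℤ) i j
  refine ⟨n - k * m, ?_⟩
  rw [P.coroot_reflectionPerm, P.coreflection_apply]
  simp [hm, hn, ← hk, mul_comm]

theorem mem_integralIndices_of_sub_mem_weightLattice {P : RootPairing ι R M N} {x y : M}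
    (h : x - y ∈ weightLattice P) {i : ι} {n : ℤ} (hi : P.toLinearMap x (P.coroot i) = n) :
    i ∈ integralIndices P y := by
  obtain ⟨m, hm⟩ := h i
  refine ⟨n - m, ?_⟩
  rw [map_sub, LinearMap.sub_apply, hi] at hm
  rw [Int.cast_sub, ← hm, sub_sub_cancel]

/-- The integral root system `Φ_[x]` of a vector `x`, as a root pairing in its own right. -/
def integralSubpairing (P : RootPairing ι R M N) [P.IsCrystallographic] (x : M) :
    RootPairing (integralIndices P x) R M N :=
  subpairing P (integralIndices P x) fun _ hi _ ↦ reflectionPerm_mem_integralIndices P hi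

@[simp]
theorem integralSubpairing_toLinearMap (P : RootPairing ι R M N) [P.IsCrystallographic] (x : M) :
    (integralSubpairing P x).toLinearMap = P.toLinearMap :=
  rfl

@[simp]
theorem integralSubpairing_coroot (P : RootPairing ι R M N) [P.IsCrystallographic] (x : M)
    (i : integralIndices P x) : (integralSubpairing P x).coroot i = P.coroot i :=
  rfl

instance (P : RootPairing ι R M N) [P.IsCrystallographic] (x : M) :
    (integralSubpairing P x).IsCrystallographic :=
  ⟨fun i j ↦ P.exists_value (S := ℤ) i.1 j.1⟩

instance (P : RootPairing ι R M N) [P.IsCrystallographic] [P.IsReduced] (x : M) :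
    (integralSubpairing P x).IsReduced :=
  ⟨fun i j ↦ IsReduced.eq_or_eq_neg (P := P) i.1 j.1⟩

end IntegralRoots

section SingularWeight

variable {ι R M N : Type*} [AddCommGroup M] [AddCommGroup N]

theorem root_eq_or_eq_neg_of_toLinearMap_coroot_eq_zero [CommRing R] [CharZero R] [Module R M]
    [Module R N] {P : RootPairing ι R M N} [P.IsCrystallographic] {x y : M}
    {b : (integralSubpairing P x).Base} {a : integralIndices P x} (hyx : y - x ∈ weightLattice P)
    (hy : ∀ i, b.IsPos i → i = a ∨ P.toLinearMap y (P.coroot i) ≠ 0) {i : ι}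
    (hi : P.toLinearMap y (P.coroot i) = 0) : P.root i = P.root a ∨ P.root i = -P.root a := by
  let Q := integralSubpairing P x
  let j : integralIndices P x :=
    ⟨i, mem_integralIndices_of_sub_mem_weightLattice hyx (n := 0) (by rw [hi, Int.cast_zero])⟩
  obtain hpos | hneg := Base.IsPos.or_neg b j
  · exact .inl (congrArg P.root (congrArg Subtype.val ((hy j hpos).resolve_right (not_not.2 hi))))
  · have hroot : Q.root (Q.reflectionPerm j j) = -P.root i := by
      rw [Q.root_reflectionPerm, Q.reflection_apply_self]
      rfl
    have hcoroot : Q.coroot (Q.reflectionPerm j j) = -P.coroot i := by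
      rw [Q.coroot_reflectionPerm, Q.coreflection_apply_self]
      rfl
    have hja : Q.reflectionPerm j j = a := (hy _ hneg).resolve_right <| not_not.2 <| by
      rw [← integralSubpairing_coroot, indexNeg_neg, hcoroot, map_neg, hi, neg_zero]
    rw [hja] at hroot
    exact .inr (neg_eq_iff_eq_neg.1 hroot.symm)

variable [Finite ι] [Field R] [CharZero R] [Module R M] [Module R N] {P : RootPairing ι R M N}
  [P.IsRootSystem] [P.IsCrystallographic] [P.IsReduced] {x : M}
  {b : (integralSubpairing P x).Base} {a : integralIndices P x}

theorem exists_sub_mem_weightLattice_toLinearMap_coroot_pos (ha : a ∈ b.support) :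
    ∃ y, y - x ∈ weightLattice P ∧ P.toLinearMap y (P.coroot a) = 0 ∧
      ∀ i, b.IsPos i → i = a ∨ ∃ q : ℚ, 0 < q ∧ P.toLinearMap y (P.coroot i) = q := by
  obtain ⟨r, hr, hra⟩ := exists_mem_weightLattice_toLinearMap_coroot_eq_one (P := P) (a : ι)
  obtain ⟨m, hm⟩ := a.2
  obtain ⟨θ, hθ, hθa, hθpos⟩ := exists_mem_closure_range_root_toLinearMap_coroot_pos ha
  have hroots : range (integralSubpairing P x).root ⊆ weightLattice P :=
    range_subset_iff.2 fun i ↦ root_mem_weightLattice P i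
  replace hθ : θ ∈ weightLattice P := (AddSubgroup.closure_le _).2 hroots hθ
  obtain ⟨n, hn⟩ := exists_nsmul_add_toLinearMap_coroot_pos (b := b) (x := x - m • r)
    (fun j _ ↦ by
      obtain ⟨⟨k, hk⟩, l, hl⟩ := And.intro j.2 (hr j)
      exact ⟨k - m * l, by simp [hk, hl]⟩) hθpos
  have hya : P.toLinearMap (x - m • r + n • θ) (P.coroot a) = 0 := by
    rw [integralSubpairing_toLinearMap, integralSubpairing_coroot] at hθa
    simp [hm, hra, hθa]
  refine ⟨x - m • r + n • θ, ?_, hya, fun i hi ↦ ?_⟩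
  · rw [add_sub_right_comm, sub_sub_cancel_left]
    exact add_mem (neg_mem (zsmul_mem hr m)) (nsmul_mem hθ n)
  · refine eq_or_exists_rat_pos_eq_toLinearMap_coroot (P := integralSubpairing P x) hya
      (fun j hj hja ↦ ?_) hi
    obtain ⟨k, hk, hkj⟩ := hn j hj hja
    exact ⟨k, by exact_mod_cast hk, by rw [hkj, Rat.cast_intCast]⟩

theorem exists_sub_mem_weightLattice_stabilizer_eq (ha : a ∈ b.support) :
    ∃ y, y - x ∈ weightLattice P ∧
      (∀ i, b.IsPos i → ∀ n : ℤ, P.toLinearMap y (P.coroot i) = n → 0 ≤ n) ∧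
      ∀ w ∈ Subgroup.closure (range P.reflection), w y = y ↔ w = 1 ∨ w = P.reflection a := by
  obtain ⟨y, hyx, hya, hy⟩ := exists_sub_mem_weightLattice_toLinearMap_coroot_pos ha
  refine ⟨y, hyx, fun i hi n hn ↦ ?_, fun w hw ↦ ?_⟩
  · obtain rfl | ⟨q, hq, hqi⟩ := hy i hi
    · rw [hya] at hn
      exact (by exact_mod_cast hn : 0 = n).le
    · have hqn : q = n := by exact_mod_cast hqi.symm.trans hn
      exact_mod_cast (hqn ▸ hq).le
  · refine apply_eq_self_iff_of_toLinearMap_coroot_eq_zero hya (fun i hi ↦ ?_) hw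
    refine root_eq_or_eq_neg_of_toLinearMap_coroot_eq_zero (b := b) hyx (fun j hj ↦ ?_) hi
    refine (hy j hj).imp_right ?_
    rintro ⟨q, hq, hqj⟩
    rw [hqj]
    exact_mod_cast hq.ne'

theorem exists_sub_mem_weightLattice_nonneg_stabilizer_eq {Ψ Δ : Set M}
    (hΨ : ∀ i, P.root i ∉ Ψ → -P.root i ∈ Ψ) (hΔ : Δ ⊆ P.root '' integralIndices P x)
    (hli : LinearIndepOn R id Δ)
    (hmem : ∀ i ∈ integralIndices P x, P.root i ∈ Ψ → P.root i ∈ AddSubmonoid.closure Δ)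
    {i : ι} (hi : P.root i ∈ Δ) :
    ∃ y, y - x ∈ weightLattice P ∧
      (∀ j, P.root j ∈ Ψ → ∀ n : ℤ, P.toLinearMap y (P.coroot j) = n → 0 ≤ n) ∧
      ∀ w ∈ Subgroup.closure (range P.reflection), w y = y ↔ w = 1 ∨ w = P.reflection i := by
  obtain ⟨b, rfl, hbpos⟩ := exists_base_image_root_support_eq (integralSubpairing P x) (Ψ := Ψ)
    (fun j ↦ hΨ j) (by rwa [image_eq_range] at hΔ) hli fun j ↦ hmem j j.2
  obtain ⟨a, ha, hai⟩ := hi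
  obtain rfl : (a : ι) = i := P.root.injective hai
  obtain ⟨y, hyx, hpos, hstab⟩ := exists_sub_mem_weightLattice_stabilizer_eq ha
  exact ⟨y, hyx, fun j hj n hn ↦
    hpos ⟨j, mem_integralIndices_of_sub_mem_weightLattice hyx hn⟩ (hbpos _ hj) n hn, hstab⟩

end SingularWeight

section FinsetOfRoots

variable {K V : Type*} [Field K] [CharZero K] [AddCommGroup V] [Module K V]

theorem injOn_of_mapsTo_preReflection {Φ : Set V} {coroot : V → Dual K V} (hΦ : Φ.Finite)
    (h2 : ∀ α ∈ Φ, coroot α α = 2) (hmaps : ∀ α ∈ Φ, MapsTo (preReflection α (coroot α)) Φ Φ) :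
    InjOn coroot Φ := fun α hα β hβ h ↦ by
  have : IsAddTorsionFree V := .of_isTorsionFree K V
  exact eq_of_mapsTo_reflection_of_mem hΦ (h2 α hα) (h2 β hβ) (h ▸ h2 α hα) (h ▸ h2 β hβ)
    (hmaps α hα) (hmaps β hβ) hβ

theorem exists_isRootSystem_root_eq_coe {Φ : Finset V} {coroot : V → Dual K V} {s : V → V ≃ₗ[K] V}
    (hspan : span K (Φ : Set V) = ⊤) (h2 : ∀ α ∈ Φ, coroot α α = 2)
    (hs : ∀ α ∈ Φ, ∀ x, s α x = x - coroot α x • α) (hsΦ : ∀ α ∈ Φ, ∀ β ∈ Φ, s α β ∈ Φ)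
    (hcrys : ∀ α ∈ Φ, ∀ β ∈ Φ, ∃ n : ℤ, coroot α β = n)
    (hred : ∀ α ∈ Φ, ∀ c : K, c • α ∈ Φ → c = 1 ∨ c = -1) :
    ∃ P : RootPairing Φ K V (Dual K V), P.IsRootSystem ∧ P.IsCrystallographic ∧ P.IsReduced ∧
      (∀ i, P.root i = i) ∧ (∀ i x, P.toLinearMap x (P.coroot i) = coroot i x) ∧
        ∀ i, P.reflection i = s i := by
  have : FiniteDimensional K V := ⟨hspan ▸ fg_span Φ.finite_toSet⟩
  have hmaps (α) (hα : α ∈ Φ) : MapsTo (preReflection α (coroot α)) Φ Φ := fun β hβ ↦ by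
    rw [preReflection_apply, ← hs α hα]
    exact hsΦ α hα β hβ
  have hinj := injOn_of_mapsTo_preReflection Φ.finite_toSet h2 hmaps
  have hrange : range (Function.Embedding.subtype (· ∈ Φ)) = Φ := Subtype.range_coe
  let P : RootPairing Φ K V (Dual K V) := .mk'' (Dual.eval K V) (Function.Embedding.subtype (· ∈ Φ))
    ⟨fun i ↦ coroot i, fun i j h ↦ Subtype.ext (hinj i.2 j.2 h)⟩ (fun i ↦ h2 i i.2)
    (fun i ↦ by simpa only [hrange] using! hmaps i i.2) (by rwa [hrange])
  have hint (i j : Φ) : ∃ n : ℤ, n = coroot j i := (hcrys j j.2 i i.2).imp fun _ ↦ Eq.symm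
  refine ⟨P, isRootSystem_mk'' hint, ⟨hint⟩, ⟨fun i j hij ↦ ?_⟩, fun _ ↦ rfl, fun _ _ ↦ rfl,
    fun i ↦ LinearEquiv.ext fun x ↦ (hs i i.2 x).symm⟩
  rw [LinearIndependent.pair_iff' (P.ne_zero i)] at hij
  push Not at hij
  obtain ⟨c, hc⟩ := hij
  obtain rfl | rfl := hred i i.2 c (hc ▸ j.2)
  · exact .inl (by rw [← hc, one_smul])
  · exact .inr (by rw [← hc, neg_one_smul, neg_neg])

theorem exists_dominant_weight_with_stabilizer_simple_reflection_general
    {Φ Φpos Δ : Finset V} {coroot : V → Dual K V} {s : V → V ≃ₗ[K] V} {ρ lam α : V}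
    (hspan : span K (Φ : Set V) = ⊤) (h2 : ∀ α ∈ Φ, coroot α α = 2)
    (hred : ∀ α ∈ Φ, ∀ c : K, c • α ∈ Φ → c = 1 ∨ c = -1)
    (hcrys : ∀ α ∈ Φ, ∀ β ∈ Φ, ∃ n : ℤ, coroot α β = n)
    (hs : ∀ α ∈ Φ, ∀ x, s α x = x - coroot α x • α) (hsΦ : ∀ α ∈ Φ, ∀ β ∈ Φ, s α β ∈ Φ)
    (hpos : Φpos ⊆ Φ) (hsplit : ∀ α ∈ Φ, α ∈ Φpos ↔ -α ∉ Φpos) (hρ : 2 • ρ = ∑ α ∈ Φpos, α)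
    (hΔsub : ∀ α ∈ Δ, α ∈ Φ ∧ ∃ n : ℤ, coroot α lam = n) (hΔind : LinearIndepOn K id (Δ : Set V))
    (hΔgen : ∀ β ∈ Φpos, (∃ n : ℤ, coroot β lam = n) → ∃ c : V → ℕ, β = ∑ α ∈ Δ, c α • α)
    (hα : α ∈ Δ) :
    ∃ μ : V, (∀ β ∈ Φ, ∃ n : ℤ, coroot β (μ - lam) = n) ∧
      (∀ β ∈ Φpos, ∀ n : ℤ, n < 0 → coroot β (μ + ρ) ≠ n) ∧
      ∀ w ∈ Subgroup.closure (s '' Φ), w (μ + ρ) - ρ = μ ↔ w = 1 ∨ w = s α := by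
  obtain ⟨P, _, _, _, hroot, hcoroot, hrefl⟩ :=
    exists_isRootSystem_root_eq_coe hspan h2 hs hsΦ hcrys hred
  have hWeyl : Subgroup.closure (s '' Φ) = Subgroup.closure (range P.reflection) := by
    rw [image_eq_range, funext hrefl]
    rfl
  have hρΛ : ρ ∈ weightLattice P := mem_weightLattice_of_two_nsmul_eq_sum
    (fun β hβ ↦ ⟨⟨β, hpos hβ⟩, hroot _⟩) (fun i ↦ hroot i ▸ hsplit i i.2) hρ
  have hint (i : Φ) : i ∈ integralIndices P lam ↔ ∃ n : ℤ, coroot i lam = n := by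
    simp only [integralIndices, mem_ofPred_eq, hcoroot]
  have hΔ : (Δ : Set V) ⊆ P.root '' integralIndices P lam := fun β hβ ↦
    ⟨⟨β, (hΔsub β hβ).1⟩, (hint _).2 (hΔsub β hβ).2, hroot _⟩
  have hmem (i) (hi : i ∈ integralIndices P lam) (hi_pos : P.root i ∈ (Φpos : Set V)) :
      P.root i ∈ AddSubmonoid.closure (Δ : Set V) := by
    rw [hroot] at hi_pos ⊢
    obtain ⟨c, hc⟩ := hΔgen i hi_pos ((hint i).1 hi)
    rw [hc]
    exact sum_mem fun β hβ ↦ nsmul_mem (AddSubmonoid.subset_closure hβ) _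
  obtain ⟨y, hyΛ, hdom, hstab⟩ := exists_sub_mem_weightLattice_nonneg_stabilizer_eq
    (i := ⟨α, (hΔsub α hα).1⟩) (fun i ↦ hroot i ▸ (hsplit i i.2).not_left.1) hΔ hΔind hmem
    (by rwa [hroot])
  refine ⟨y - ρ, fun β hβ ↦ ?_, fun β hβ n hn hβn ↦ ?_, fun w hw ↦ ?_⟩
  · simpa only [hcoroot, sub_right_comm] using sub_mem hyΛ hρΛ ⟨β, hβ⟩
  · rw [sub_add_cancel, ← hcoroot ⟨β, hpos hβ⟩] at hβn
    exact hn.not_ge (hdom _ (by rwa [hroot]) n hβn)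
  · rw [sub_add_cancel, sub_left_inj, hstab w (hWeyl ▸ hw), hrefl]

end FinsetOfRoots

end RootSystems

/-- Let `λ ∈ 𝔥*` and let `α ∈ Δ_[λ]` be a simple root of the integral root
system `Φ_[λ] = {α ∈ Φ : ⟨λ, α∨⟩ ∈ ℤ}`.  Then there exists a dominant weight `μ ∈ λ + Λ`
whose stabilizer in `W` under the dot action is exactly the two-element subgroup `{1, s_α}`.

Setting: `Φ` is a finite reduced crystallographic root system in `V` with positive system
`Φpos`, half-sum of positive roots `ρ`, coroot pairing `coroot`, reflections `s`, and Weyl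
group `W`.  `Δ` is the unique system of simple roots of `Φ_[λ]` contained in `Φ⁺`, recorded by
the hypotheses: `Δ` consists of positive roots of `Φ_[λ]`, is linearly independent, and every
positive root of `Φ_[λ]` is a nonnegative integral combination of `Δ`. -/
theorem exists_dominant_weight_with_stabilizer_simple_reflection
    (Φ Φpos Δ : Finset V) (coroot : V → (V →ₗ[ℂ] ℂ)) (s : V → (V ≃ₗ[ℂ] V))
    (W : Subgroup (V ≃ₗ[ℂ] V)) (ρ : V)
    (hΦ0 : (0 : V) ∉ Φ)
    (hspan : Submodule.span ℂ (Φ : Set V) = ⊤)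
    (h2 : ∀ α ∈ Φ, coroot α α = 2)
    (hred : ∀ α ∈ Φ, ∀ c : ℂ, c • α ∈ (Φ : Set V) → c = 1 ∨ c = -1)
    (hcrys : ∀ α ∈ Φ, ∀ β ∈ Φ, ∃ n : ℤ, coroot α β = (n : ℂ))
    (hs : ∀ α ∈ Φ, ∀ x : V, s α x = x - coroot α x • α)
    (hsΦ : ∀ α ∈ Φ, ∀ β ∈ Φ, s α β ∈ Φ)
    (hW : W = Subgroup.closure (s '' (Φ : Set V)))
    (hpos : Φpos ⊆ Φ)
    (hsplit : ∀ α ∈ Φ, (α ∈ Φpos ↔ ¬(-α ∈ Φpos)))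
    (hρ : (2 : ℤ) • ρ = ∑ α ∈ Φpos, α)
    (lam : V)
    -- `Δ` is the system of simple roots of `Φ_[λ]` contained in `Φ⁺`:
    (hΔsub : ∀ α ∈ Δ, α ∈ Φ ∧ α ∈ Φpos ∧ ∃ n : ℤ, coroot α lam = (n : ℂ))
    (hΔind : LinearIndependent ℂ (fun a : {x // x ∈ Δ} => (a : V)))
    (hΔgen : ∀ β ∈ Φ, β ∈ Φpos → (∃ n : ℤ, coroot β lam = (n : ℂ)) →
      ∃ c : V → ℕ, β = ∑ α ∈ Δ, (c α : ℤ) • α)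
    -- an arbitrary element `α` of `Δ_[λ]`:
    (α : V) (hα : α ∈ Δ) :
    ∃ μ : V,
      InWeightLattice Φ coroot (μ - lam) ∧
      IsDominant Φpos coroot ρ μ ∧
      (∀ w ∈ W, dotAct ρ w μ = μ ↔ (w = 1 ∨ w = s α)) := by
  subst hW
  exact exists_dominant_weight_with_stabilizer_simple_reflection_general hspan h2 hred hcrys hs hsΦ
    hpos hsplit (by exact_mod_cast hρ) (fun β hβ ↦ ⟨(hΔsub β hβ).1, (hΔsub β hβ).2.2⟩) hΔind
    (fun β hβ hint ↦ by exact_mod_cast hΔgen β (hpos hβ) hβ hint) hα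

end
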